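/- arXiv:2505.15290 — 5 statements merged into one kernel-verified Lean document; each statement's English description precedes it below -/
import Mathlib

section
/- Let X be a nonempty finite set, let κ, λ, μ, ν be probability distributions on X, and let ω be a coupling of λ and μ. Then there exist a coupling π of κ and μ with d_TV(ω, π) ≤ d_TV(κ, λ), and a coupling ρ of λ and ν with d_TV(ω, ρ) ≤ d_TV(μ, ν). -/
open Finset Filter
open scoped Classical

/-- `μ` is a probability distribution on the finite type `X`. -/
def IsDist {X : Type*} [Fintype X] (μ : X → ℝ) : Prop :=
  (∀ x, 0 ≤ μ x) ∧ ∑ x, μ x = 1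

/-- `ω` is a coupling of the distributions `μ` and `ν`. -/
def IsCoupling {X : Type*} [Fintype X] (ω : X × X → ℝ) (μ ν : X → ℝ) : Prop :=
  IsDist ω ∧ (∀ x, ∑ y, ω (x, y) = μ x) ∧ (∀ x, ∑ y, ω (y, x) = ν x)

/-- Total variation distance: the maximum pointwise difference. -/
noncomputable def dTV {X : Type*} [Fintype X] (μ ν : X → ℝ) : ℝ :=
  ⨆ x, |μ x - ν x|

/-- The support of a (sub)distribution: points of positive probability. -/
def psupp {X : Type*} (μ : X → ℝ) : Set X := {x | 0 < μ x}

/-- Distance between functions into distributions. -/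
noncomputable def dF {A B : Type*} [Fintype B] (f g : A → B → ℝ) : ℝ :=
  ⨆ a, dTV (f a) (g a)

/-!
Write `a` and `b` for the negative and positive parts of `κ - l`; they have the same total mass.
Scale down row `x` of `ω` so that it loses mass `a x`, let `r` be the vector of masses lost by the
columns, and add back the product of `b` and `r`, normalised by their common mass. The rows now sum
to `κ` and the columns still to `μ`. An entry of row `x` loses at most `a x` and gains at most
`b x`, so it changes by at most `max (a x) (b x) = |κ x - l x|`. The other marginal is handled by
transposing.
-/

section RowSums

variable {X Y 𝕜 : Type*} [Fintype X] [Fintype Y] [Field 𝕜] [LinearOrder 𝕜] [IsStrictOrderedRing 𝕜]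

theorem exists_nonneg_le_sum_eq {f : Y → 𝕜} (hf : ∀ y, 0 ≤ f y) {a : 𝕜} (ha : 0 ≤ a)
    (haf : a ≤ ∑ y, f y) : ∃ g : Y → 𝕜, (∀ y, 0 ≤ g y) ∧ (∀ y, g y ≤ f y) ∧ ∑ y, g y = a := by
  have hsum : 0 ≤ ∑ y, f y := ha.trans haf
  refine ⟨fun y => a / (∑ y, f y) * f y, fun y => mul_nonneg (div_nonneg ha hsum) (hf y),
    fun y => mul_le_of_le_one_left (hf y) (div_le_one_of_le₀ haf hsum), ?_⟩
  rw [← mul_sum]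
  exact div_mul_cancel_of_imp fun h => le_antisymm (h ▸ haf) ha

theorem exists_nonneg_rowSum_eq_colSum_eq {b : X → 𝕜} {r : Y → 𝕜} (hb : ∀ x, 0 ≤ b x)
    (hr : ∀ y, 0 ≤ r y) (hbr : ∑ x, b x = ∑ y, r y) :
    ∃ γ : X → Y → 𝕜, (∀ x y, 0 ≤ γ x y) ∧ (∀ x, ∑ y, γ x y = b x) ∧
      ∀ y, ∑ x, γ x y = r y := by
  have hb_zero (h : ∑ x, b x = 0) (x : X) : b x = 0 :=
    (sum_eq_zero_iff_of_nonneg fun x _ => hb x).1 h x (mem_univ x)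
  have hr_zero (h : ∑ y, r y = 0) (y : Y) : r y = 0 :=
    (sum_eq_zero_iff_of_nonneg fun y _ => hr y).1 h y (mem_univ y)
  refine ⟨fun x y => b x * r y / ∑ x, b x, fun x y => ?_, fun x => ?_, fun y => ?_⟩
  · exact div_nonneg (mul_nonneg (hb x) (hr y)) (sum_nonneg fun x _ => hb x)
  · rw [← sum_div, ← mul_sum, ← hbr]
    exact mul_div_cancel_of_imp fun h => hb_zero h x
  · rw [← sum_div, ← sum_mul, mul_comm]
    exact mul_div_cancel_of_imp fun h => hr_zero (hbr ▸ h) y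

theorem exists_rowSum_eq_sub_add_colSum_eq {ω : X → Y → 𝕜} (hω : ∀ x y, 0 ≤ ω x y) {a b : X → 𝕜}
    (ha : ∀ x, 0 ≤ a x) (hb : ∀ x, 0 ≤ b x) (haω : ∀ x, a x ≤ ∑ y, ω x y)
    (hab : ∑ x, a x = ∑ x, b x) :
    ∃ π : X → Y → 𝕜, (∀ x y, 0 ≤ π x y) ∧ (∀ x, ∑ y, π x y = ∑ y, ω x y - a x + b x) ∧
      (∀ y, ∑ x, π x y = ∑ x, ω x y) ∧
      ∀ x y, ω x y - a x ≤ π x y ∧ π x y ≤ ω x y + b x := by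
  choose δ hδ_nonneg hδ_le hδ_row using fun x => exists_nonneg_le_sum_eq (hω x) (ha x) (haω x)
  have hmass : ∑ x, b x = ∑ y, ∑ x, δ x y := by
    rw [sum_comm, ← hab, sum_congr rfl fun x _ => hδ_row x]
  obtain ⟨γ, hγ_nonneg, hγ_row, hγ_col⟩ := exists_nonneg_rowSum_eq_colSum_eq hb
    (fun y => sum_nonneg fun x _ => hδ_nonneg x y) hmass
  have hδ_le_row (x : X) (y : Y) : δ x y ≤ a x :=
    hδ_row x ▸ single_le_sum (fun y' _ => hδ_nonneg x y') (mem_univ y)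
  have hγ_le_row (x : X) (y : Y) : γ x y ≤ b x :=
    hγ_row x ▸ single_le_sum (fun y' _ => hγ_nonneg x y') (mem_univ y)
  refine ⟨fun x y => ω x y - δ x y + γ x y, fun x y => ?_, fun x => ?_, fun y => ?_,
    fun x y => ⟨?_, ?_⟩⟩
  · exact add_nonneg (sub_nonneg.2 (hδ_le x y)) (hγ_nonneg x y)
  · rw [sum_add_distrib, sum_sub_distrib, hδ_row, hγ_row]
  · rw [sum_add_distrib, sum_sub_distrib, hγ_col, sub_add_cancel]
  · linarith [hδ_le_row x y, hγ_nonneg x y]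
  · linarith [hδ_nonneg x y, hγ_le_row x y]

theorem exists_rowSum_eq_colSum_eq_abs_sub_le {ω : X → Y → 𝕜} (hω : ∀ x y, 0 ≤ ω x y)
    {κ : X → 𝕜} (hκ : ∀ x, 0 ≤ κ x) (hsum : ∑ x, κ x = ∑ x, ∑ y, ω x y) :
    ∃ π : X → Y → 𝕜, (∀ x y, 0 ≤ π x y) ∧ (∀ x, ∑ y, π x y = κ x) ∧
      (∀ y, ∑ x, π x y = ∑ x, ω x y) ∧ ∀ x y, |ω x y - π x y| ≤ |κ x - ∑ y', ω x y'| := by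
  set d : X → 𝕜 := fun x => κ x - ∑ y, ω x y
  have hd_parts (x : X) : (d x)⁺ - (d x)⁻ = κ x - ∑ y, ω x y := posPart_sub_negPart (d x)
  have hd_abs (x : X) : (d x)⁺ + (d x)⁻ = |d x| := posPart_add_negPart (d x)
  have hd_le (x : X) : (d x)⁻ ≤ ∑ y, ω x y :=
    sup_le ((neg_sub _ _).trans_le (sub_le_self _ (hκ x))) (sum_nonneg fun y _ => hω x y)
  have hd_mass : ∑ x, (d x)⁻ = ∑ x, (d x)⁺ := by
    rw [eq_comm, ← sub_eq_zero, ← sum_sub_distrib]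
    simp only [hd_parts, sum_sub_distrib, hsum, sub_self]
  obtain ⟨π, hπ_nonneg, hπ_row, hπ_col, hπ_bounds⟩ := exists_rowSum_eq_sub_add_colSum_eq hω
    (fun x => negPart_nonneg (d x)) (fun x => posPart_nonneg (d x)) hd_le hd_mass
  refine ⟨π, hπ_nonneg, fun x => ?_, hπ_col, fun x y => abs_sub_le_iff.2 ⟨?_, ?_⟩⟩
  · linear_combination hπ_row x + hd_parts x
  · linarith [(hπ_bounds x y).1, hd_abs x, posPart_nonneg (d x)]
  · linarith [(hπ_bounds x y).2, hd_abs x, negPart_nonneg (d x)]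

end RowSums

section TotalVariation

variable {X Y : Type*} [Fintype X] [Fintype Y]

theorem dTV_comm (μ ν : X → ℝ) : dTV μ ν = dTV ν μ := by
  simp only [dTV, abs_sub_comm]

theorem dTV_comp_equiv (μ ν : Y → ℝ) (e : X ≃ Y) : dTV (μ ∘ e) (ν ∘ e) = dTV μ ν :=
  e.iSup_comp (g := fun y => |μ y - ν y|)

theorem abs_sub_le_dTV (μ ν : X → ℝ) (x : X) : |μ x - ν x| ≤ dTV μ ν :=
  le_ciSup (f := fun x => |μ x - ν x|) (Set.finite_range _).bddAbove x

theorem dTV_le_of_forall_abs_sub_le {μ ν : X → ℝ} {d : ℝ} (hd : 0 ≤ d)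
    (h : ∀ x, |μ x - ν x| ≤ d) : dTV μ ν ≤ d :=
  Real.iSup_le h hd

theorem dTV_nonneg (μ ν : X → ℝ) : 0 ≤ dTV μ ν :=
  Real.iSup_nonneg fun _ => abs_nonneg _

end TotalVariation

namespace IsCoupling

variable {X : Type*} [Fintype X] {ω : X × X → ℝ} {κ l μ ν : X → ℝ}

theorem swap (hω : IsCoupling ω μ ν) : IsCoupling (ω ∘ Prod.swap) ν μ := by
  obtain ⟨⟨hω_nonneg, hω_sum⟩, hω_fst, hω_snd⟩ := hω
  exact ⟨⟨fun p => hω_nonneg p.swap, (Equiv.sum_comp (Equiv.prodComm X X) ω).trans hω_sum⟩,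
    hω_snd, hω_fst⟩

theorem exists_left_marginal_dTV_le (hω : IsCoupling ω l μ) (hκ : IsDist κ) :
    ∃ π : X × X → ℝ, IsCoupling π κ μ ∧ dTV ω π ≤ dTV κ l := by
  obtain ⟨⟨hω_nonneg, hω_sum⟩, hω_fst, hω_snd⟩ := hω
  obtain ⟨hκ_nonneg, hκ_sum⟩ := hκ
  have hmass : ∑ x, κ x = ∑ x, ∑ y, ω (x, y) := by
    rw [hκ_sum, ← Fintype.sum_prod_type, hω_sum]
  obtain ⟨π, hπ_nonneg, hπ_row, hπ_col, hπ_abs⟩ :=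
    exists_rowSum_eq_colSum_eq_abs_sub_le (fun x y => hω_nonneg (x, y)) hκ_nonneg hmass
  simp only [hω_snd] at hπ_col
  simp only [hω_fst] at hπ_abs
  refine ⟨fun p => π p.1 p.2, ⟨⟨fun p => hπ_nonneg p.1 p.2, ?_⟩, hπ_row, hπ_col⟩, ?_⟩
  · simp only [Fintype.sum_prod_type, hπ_row, hκ_sum]
  · exact dTV_le_of_forall_abs_sub_le (dTV_nonneg κ l) fun p =>
      (hπ_abs p.1 p.2).trans (abs_sub_le_dTV κ l p.1)

theorem exists_right_marginal_dTV_le (hω : IsCoupling ω l μ) (hν : IsDist ν) :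
    ∃ ρ : X × X → ℝ, IsCoupling ρ l ν ∧ dTV ω ρ ≤ dTV μ ν := by
  obtain ⟨π, hπ, hdist⟩ := hω.swap.exists_left_marginal_dTV_le hν
  refine ⟨π ∘ Prod.swap, hπ.swap, ?_⟩
  calc dTV ω (π ∘ Prod.swap) = dTV (ω ∘ Prod.swap) π :=
        (dTV_comp_equiv ω (π ∘ Prod.swap) (Equiv.prodComm X X)).symm
    _ ≤ dTV ν μ := hdist
    _ = dTV μ ν := dTV_comm ν μ

end IsCoupling

/-- Lemma 8 (couplings): given a coupling `ω` of `l` and `μ`, there are couplings `π` of `κ,μ`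
and `ρ` of `l,ν` within total variation distance `d_TV(κ,l)` resp. `d_TV(μ,ν)` of `ω`. -/
theorem coupling_perturbation {X : Type*} [Fintype X] [Nonempty X]
    (κ l μ ν : X → ℝ) (hκ : IsDist κ) (hl : IsDist l) (hμ : IsDist μ) (hν : IsDist ν)
    (ω : X × X → ℝ) (hω : IsCoupling ω l μ) :
    (∃ π : X × X → ℝ, IsCoupling π κ μ ∧ dTV ω π ≤ dTV κ l) ∧
    (∃ ρ : X × X → ℝ, IsCoupling ρ l ν ∧ dTV ω ρ ≤ dTV μ ν) :=
  ⟨hω.exists_left_marginal_dTV_le hκ, hω.exists_right_marginal_dTV_le hν⟩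
end

section
/- Let A be an n × n real matrix (n ≥ 1) with nonnegative entries that is irreducible, in the sense that for all indices i, j there exists m ≥ 1 with (A^m)_{ij} > 0, and strictly substochastic, in the sense that every row sum of A is at most 1 and at least one row sum is strictly less than 1. Then the matrix I − A is invertible. -/
open Finset Filter
open scoped Classical

/-!
If `1 - A` is singular, then `A *ᵥ v = v` for some `v ≠ 0`. At an index `i` maximizing `‖v i‖`,
this maximum is at most a combination of the `‖v j‖` with weights `‖A i j‖` of sum at most `1`.
Hence every `j` with `A i j ≠ 0` is again a maximizer, and the weights sum to exactly `1`.
Following edges, the maximum propagates to a row of sum less than `1`, a contradiction.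
-/

section WeightedSum

variable {ι R : Type*} {s : Finset ι} {w f : ι → R} {M : R}

theorem sum_mul_le_sum_mul_of_le [Semiring R] [PartialOrder R] [IsOrderedRing R]
    (hw : ∀ j ∈ s, 0 ≤ w j) (hf : ∀ j ∈ s, f j ≤ M) :
    ∑ j ∈ s, w j * f j ≤ (∑ j ∈ s, w j) * M := by
  rw [sum_mul]
  exact sum_le_sum fun j hj => mul_le_mul_of_nonneg_left (hf j hj) (hw j hj)

variable [Semiring R] [LinearOrder R] [IsStrictOrderedRing R]

theorem one_le_sum_of_le_sum_mul (hw : ∀ j ∈ s, 0 ≤ w j) (hf : ∀ j ∈ s, f j ≤ M) (hM : 0 < M)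
    (h : M ≤ ∑ j ∈ s, w j * f j) : 1 ≤ ∑ j ∈ s, w j :=
  le_of_mul_le_mul_right (by simpa only [one_mul] using h.trans (sum_mul_le_sum_mul_of_le hw hf))
    hM

theorem eq_of_le_sum_mul (hw : ∀ j ∈ s, 0 ≤ w j) (hsum : ∑ j ∈ s, w j ≤ 1)
    (hf : ∀ j ∈ s, f j ≤ M) (hM : 0 ≤ M) (h : M ≤ ∑ j ∈ s, w j * f j)
    {j : ι} (hj : j ∈ s) (hwj : w j ≠ 0) : f j = M := by
  have hle : ∀ k ∈ s, w k * f k ≤ w k * M := fun k hk =>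
    mul_le_mul_of_nonneg_left (hf k hk) (hw k hk)
  have hsum_eq : ∑ k ∈ s, w k * f k = ∑ k ∈ s, w k * M :=
    (sum_le_sum hle).antisymm <| calc
      ∑ k ∈ s, w k * M = (∑ k ∈ s, w k) * M := (sum_mul ..).symm
      _ ≤ M := mul_le_of_le_one_left hM hsum
      _ ≤ ∑ k ∈ s, w k * f k := h
  have hj_eq : w j * f j = w j * M := (sum_eq_sum_iff_of_le hle).mp hsum_eq j hj
  exact (hf j hj).antisymm (le_of_mul_le_mul_left hj_eq.ge ((hw j hj).lt_of_ne' hwj))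

end WeightedSum

section MaximumPrinciple

open scoped Matrix

variable {ι R : Type*} [Fintype ι]

theorem reflTransGen_of_pow_apply_ne_zero [DecidableEq ι] [Semiring R] {A : Matrix ι ι R}
    {m : ℕ} {i j : ι} (h : (A ^ m) i j ≠ 0) :
    Relation.ReflTransGen (fun k l => A k l ≠ 0) i j := by
  induction m generalizing j with
  | zero =>
    obtain rfl : i = j := by
      by_contra hij
      exact h (by rw [pow_zero, Matrix.one_apply_ne hij])
    exact .refl
  | succ m ih =>
    rw [pow_succ, Matrix.mul_apply] at h
    obtain ⟨k, -, hk⟩ := exists_ne_zero_of_sum_ne_zero h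
    exact (ih (left_ne_zero_of_mul hk)).tail (right_ne_zero_of_mul hk)

theorem norm_mulVec_apply_le [NonUnitalSeminormedRing R] {κ : Type*} (A : Matrix κ ι R)
    (v : ι → R) (i : κ) : ‖(A *ᵥ v) i‖ ≤ ∑ j, ‖A i j‖ * ‖v j‖ :=
  norm_sum_le_of_le univ fun _ _ => norm_mul_le _ _

theorem norm_eq_of_mulVec_eq_self_of_reflTransGen [NonUnitalNormedRing R] {A : Matrix ι ι R}
    (hsub : ∀ i, ∑ j, ‖A i j‖ ≤ 1) {v : ι → R} (hv : A *ᵥ v = v) {i j : ι}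
    (hmax : ∀ k, ‖v k‖ ≤ ‖v i‖) (hij : Relation.ReflTransGen (fun k l => A k l ≠ 0) i j) :
    ‖v j‖ = ‖v i‖ := by
  induction hij with
  | refl => rfl
  | @tail k l _ hkl hk =>
    have hle : ‖v i‖ ≤ ∑ j, ‖A k j‖ * ‖v j‖ := by
      simpa only [hv, hk] using norm_mulVec_apply_le A v k
    exact eq_of_le_sum_mul (fun _ _ => norm_nonneg _) (hsub k) (fun j _ => hmax j)
      (norm_nonneg _) hle (mem_univ l) (norm_ne_zero_iff.mpr hkl)

theorem eq_zero_of_mulVec_eq_self [NonUnitalNormedRing R] {A : Matrix ι ι R}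
    (hsub : ∀ i, ∑ j, ‖A i j‖ ≤ 1)
    (hreach : ∀ i, ∃ s, Relation.ReflTransGen (fun k l => A k l ≠ 0) i s ∧ ∑ j, ‖A s j‖ < 1)
    {v : ι → R} (hv : A *ᵥ v = v) : v = 0 := by
  by_contra hv0
  obtain ⟨k, hk⟩ := Function.ne_iff.mp hv0
  have : Nonempty ι := ⟨k⟩
  obtain ⟨i, hmax⟩ := Finite.exists_max fun j => ‖v j‖
  obtain ⟨s, his, hs⟩ := hreach i
  have hvs : ‖v s‖ = ‖v i‖ := norm_eq_of_mulVec_eq_self_of_reflTransGen hsub hv hmax his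
  have hpos : 0 < ‖v s‖ := hvs ▸ (norm_pos_iff.mpr hk).trans_le (hmax k)
  have hle : ‖v s‖ ≤ ∑ j, ‖A s j‖ * ‖v j‖ := by
    simpa only [hv] using norm_mulVec_apply_le A v s
  exact hs.not_ge <| one_le_sum_of_le_sum_mul (fun _ _ => norm_nonneg _)
    (fun j _ => hvs ▸ hmax j) hpos hle

end MaximumPrinciple

/-- Reachability is phrased through edges because, for entries of varying sign or argument, the
contributions of different paths may cancel in the powers of `A`. -/
theorem sub_one_invertible_of_irreducible_substochastic_general {ι K : Type*} [Fintype ι]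
    [DecidableEq ι] [NormedField K] (A : Matrix ι ι K) (hsub : ∀ i, ∑ j, ‖A i j‖ ≤ 1)
    (hreach : ∀ i, ∃ s, Relation.ReflTransGen (fun k l => A k l ≠ 0) i s ∧ ∑ j, ‖A s j‖ < 1) :
    IsUnit (1 - A) := by
  rw [Matrix.isUnit_iff_isUnit_det, isUnit_iff_ne_zero]
  intro hdet
  obtain ⟨v, hv0, hv⟩ := Matrix.exists_mulVec_eq_zero_iff.mpr hdet
  rw [Matrix.sub_mulVec, Matrix.one_mulVec, sub_eq_zero] at hv
  exact hv0 (eq_zero_of_mulVec_eq_self hsub hreach hv.symm)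

/-- Proposition 16: if `A` is a nonnegative, irreducible and strictly substochastic matrix,
then `I - A` is invertible. -/
theorem sub_one_invertible_of_irreducible_substochastic {n : ℕ} (hn : 1 ≤ n)
    (A : Matrix (Fin n) (Fin n) ℝ)
    (hnonneg : ∀ i j, 0 ≤ A i j)
    (hirr : ∀ i j, ∃ m : ℕ, 1 ≤ m ∧ 0 < (A ^ m) i j)
    (hsub : ∀ i, ∑ j, A i j ≤ 1)
    (hstrict : ∃ i, ∑ j, A i j < 1) :
    IsUnit (1 - A) := by
  obtain ⟨s, hs⟩ := hstrict
  refine sub_one_invertible_of_irreducible_substochastic_general A ?_ fun i =>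
    let ⟨_, _, hpos⟩ := hirr i s
    ⟨s, reflTransGen_of_pow_apply_ne_zero hpos.ne', ?_⟩
  all_goals simpa only [Real.norm_of_nonneg (hnonneg _ _)]
end

section
/- Fix a labelled Markov chain ⟨S, L, τ, ℓ⟩. For every policy P ∈ P_τ, the following are equivalent: (1) γ_P = δ_τ (i.e., γ_P(s,t) = δ_τ(s,t) for all s, t ∈ S); (2) Γ_P(δ_τ) = δ_τ; (3) Γ_P(δ_τ) ≤ δ_τ pointwise. -/
open Finset Filter
open scoped Classical

/-- `τ` is a transition probability function on `S`. -/
def IsTransFn {S : Type*} [Fintype S] (τ : S → S → ℝ) : Prop := ∀ s, IsDist (τ s)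

/-- The diagonal `S²_Δ`. -/
def SDelta (S : Type*) : Set (S × S) := {p | p.1 = p.2}

/-- `P` is a policy for `τ` (with labelling `ℓ`). -/
def IsPolicy {S L : Type*} [Fintype S] (ℓ : S → L) (τ : S → S → ℝ)
    (P : S × S → S × S → ℝ) : Prop :=
  (∀ p, IsDist (P p)) ∧
  (∀ p : S × S, ℓ p.1 = ℓ p.2 → IsCoupling (P p) (τ p.1) (τ p.2)) ∧
  (∀ p : S × S, ℓ p.1 ≠ ℓ p.2 → psupp (P p) = {p})

/-- A policy is `S²_Δ`-closed if the support of `P (s,s)` lies in the diagonal. -/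
def DeltaClosed {S : Type*} (P : S × S → S × S → ℝ) : Prop :=
  ∀ s : S, psupp (P (s, s)) ⊆ SDelta S

/-- `d` is a `[0,1]`-valued function. -/
def Is01 {A : Type*} (d : A → ℝ) : Prop := ∀ a, 0 ≤ d a ∧ d a ≤ 1

/-- `d` is the least fixed point of `F` on the complete lattice of `[0,1]`-valued functions. -/
def IsLfpOn {A : Type*} (F : (A → ℝ) → (A → ℝ)) (d : A → ℝ) : Prop :=
  Is01 d ∧ F d = d ∧ ∀ e, Is01 e → F e = e → ∀ a, d a ≤ e a

/-- The map `Γ_P` whose least fixed point is `γ_P`. -/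
noncomputable def GammaF {S L : Type*} [Fintype S] (ℓ : S → L)
    (P : S × S → S × S → ℝ) (d : S × S → ℝ) : S × S → ℝ :=
  fun p => if ℓ p.1 ≠ ℓ p.2 then 1 else ∑ q, P p q * d q

/-- The map `Δ_τ` whose least fixed point is the probabilistic bisimilarity distance `δ_τ`. -/
noncomputable def DeltaF {S L : Type*} [Fintype S] (ℓ : S → L)
    (τ : S → S → ℝ) (d : S × S → ℝ) : S × S → ℝ :=
  fun p => if ℓ p.1 ≠ ℓ p.2 then 1
    else sInf {r | ∃ ω, IsCoupling ω (τ p.1) (τ p.2) ∧ r = ∑ q, ω q * d q}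

/-- The map whose least fixed point is `ρ_P`, the probability of reaching `S²_Δ`. -/
noncomputable def ReachF {S : Type*} [Fintype S]
    (P : S × S → S × S → ℝ) (e : S × S → ℝ) : S × S → ℝ :=
  fun p => if p.1 = p.2 then 1 else ∑ q, P p q * e q

/-- States `s` and `t` are robustly probabilistically bisimilar. -/
def Robust {S L : Type*} [Fintype S] (ℓ : S → L) (τ : S → S → ℝ) (s t : S) : Prop :=
  ∃ P ρ, IsPolicy ℓ τ P ∧ IsLfpOn (ReachF P) ρ ∧ ρ (s, t) = 1

/-- `R` is a probabilistic bisimulation. -/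
def IsBisim {S L : Type*} [Fintype S] (ℓ : S → L) (τ : S → S → ℝ)
    (R : Set (S × S)) : Prop :=
  Equivalence (fun s t => (s, t) ∈ R) ∧
  ∀ p ∈ R, ℓ p.1 = ℓ p.2 ∧ ∃ ω, IsCoupling ω (τ p.1) (τ p.2) ∧ psupp ω ⊆ R

/-- Probabilistic bisimilarity `∼`. -/
def Bisimilar {S L : Type*} [Fintype S] (ℓ : S → L) (τ : S → S → ℝ) (s t : S) : Prop :=
  ∃ R, IsBisim ℓ τ R ∧ (s, t) ∈ R

/-- A step of a path in `⟨S×S, P⟩` supported by `R`. -/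
def SupStep {S : Type*} (P : S × S → S × S → ℝ) (R : Set (S × S)) (a b : S × S) : Prop :=
  a ∈ R ∧ psupp (P a) ⊆ R ∧ 0 < P a b

/-- `R` supports a path from `p` to `S²_Δ` in `⟨S×S, P⟩`. -/
def SupportsPathToDelta {S : Type*} (P : S × S → S × S → ℝ) (R : Set (S × S))
    (p : S × S) : Prop :=
  ∃ q : S × S, q.1 = q.2 ∧ Relation.ReflTransGen (SupStep P R) p q ∧
    q ∈ R ∧ psupp (P q) ⊆ R

/-- `R` is a robust bisimulation. -/
def IsRobustBisim {S L : Type*} [Fintype S] (ℓ : S → L) (τ : S → S → ℝ)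
    (R : Set (S × S)) : Prop :=
  IsBisim ℓ τ R ∧ ∀ p ∈ R, ∃ P, IsPolicy ℓ τ P ∧ SupportsPathToDelta P R p

/-- The function `Filter` from the algorithm. -/
def FilterFn {S L : Type*} [Fintype S] (ℓ : S → L) (τ : S → S → ℝ)
    (R : Set (S × S)) : Set (S × S) :=
  {p ∈ R | ∃ P, IsPolicy ℓ τ P ∧ SupportsPathToDelta P R p}

/-- The function `Prune` from the algorithm. -/
def PruneFn {S : Type*} (Q : Set (S × S)) : Set (S × S) :=
  {p ∈ Q | ∀ u : S, ((p.2, u) ∈ Q → (p.1, u) ∈ Q) ∧ ((u, p.1) ∈ Q → (u, p.2) ∈ Q)}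

/-- `B` is the greatest probabilistic bisimulation contained in `Q` (i.e. `B = Bisim(Q)`). -/
def IsGreatestBisimIn {S L : Type*} [Fintype S] (ℓ : S → L) (τ : S → S → ℝ)
    (Q B : Set (S × S)) : Prop :=
  IsBisim ℓ τ B ∧ B ⊆ Q ∧ ∀ B', IsBisim ℓ τ B' → B' ⊆ Q → B' ⊆ B

/-- Reachability in the Markov chain `⟨S×S, P⟩`. -/
def Reach {S : Type*} (P : S × S → S × S → ℝ) (p q : S × S) : Prop :=
  Relation.ReflTransGen (fun a b => 0 < P a b) p q

/-- `C` is a communication class of `⟨S×S, P⟩`. -/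
def IsCommClass {S : Type*} (P : S × S → S × S → ℝ) (C : Set (S × S)) : Prop :=
  ∃ p, C = {q | Reach P p q ∧ Reach P q p}

/-- `C` is closed: no transition of positive probability leaves `C`. -/
def IsClosedClass {S : Type*} (P : S × S → S × S → ℝ) (C : Set (S × S)) : Prop :=
  ∀ p ∈ C, psupp (P p) ⊆ C

/-!
A policy picks one coupling for each pair of equally labelled states, while `Δ_τ` minimises over all
of them, so `Δ_τ ≤ Γ_P`. This already turns `Γ_P δ ≤ δ` into `Γ_P δ = δ`. If `Γ_P δ = δ`, then
`γ ≤ δ` by leastness of `γ`; conversely `Δ_τ γ ≤ Γ_P γ = γ`, and Knaster–Tarski gives `δ ≤ γ`.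
-/

section FixedPoints

theorem exists_mem_Icc_isFixedPt_of_monotoneOn {α : Type*} [ConditionallyCompleteLattice α]
    {f : α → α} {a b : α} (hab : a ≤ b) (hf : MonotoneOn f (Set.Icc a b))
    (ha : a ≤ f a) (hb : f b ≤ b) : ∃ x ∈ Set.Icc a b, Function.IsFixedPt f x := by
  have : Fact (a ≤ b) := ⟨hab⟩
  have hmaps : Set.MapsTo f (Set.Icc a b) (Set.Icc a b) := fun x hx =>
    ⟨ha.trans (hf (Set.left_mem_Icc.2 hab) hx hx.1),
      (hf hx (Set.right_mem_Icc.2 hab) hx.2).trans hb⟩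
  let g : Set.Icc a b →o Set.Icc a b := ⟨hmaps.restrict, fun x y hxy => hf x.2 y.2 hxy⟩
  exact ⟨g.lfp, g.lfp.2, congrArg Subtype.val g.map_lfp⟩

variable {A : Type*} {F G : (A → ℝ) → (A → ℝ)} {d c : A → ℝ}

-- `F` may leave `[0,1]`, but it preserves the interval `[0,c]`, which therefore contains a fixed
-- point.
theorem IsLfpOn.le_of_map_le (hd : IsLfpOn F d) (hF : MonotoneOn F (Set.Ici 0)) (hF0 : 0 ≤ F 0)
    (hc : Is01 c) (hFc : F c ≤ c) : d ≤ c := by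
  obtain ⟨e, ⟨he0, hec⟩, hFe⟩ := exists_mem_Icc_isFixedPt_of_monotoneOn
    (fun a => (hc a).1) (hF.mono Set.Icc_subset_Ici_self) hF0 hFc
  have he : Is01 e := fun a => ⟨he0 a, (hec a).trans (hc a).2⟩
  exact le_trans (hd.2.2 e he hFe) hec

theorem IsLfpOn.tfae_eq_of_le (hd : IsLfpOn F d) (hc : IsLfpOn G c)
    (hF : MonotoneOn F (Set.Ici 0)) (hF0 : 0 ≤ F 0) (hFG : ∀ e, Is01 e → F e ≤ G e) :
    [c = d, G d = d, G d ≤ d].TFAE := by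
  tfae_have 1 → 2 := fun h => h ▸ hc.2.1
  tfae_have 2 → 1 := fun h =>
    le_antisymm (hc.2.2 d hd.1 h) (hd.le_of_map_le hF hF0 hc.1 ((hFG c hc.1).trans_eq hc.2.1))
  tfae_have 2 → 3 := le_of_eq
  tfae_have 3 → 2 := fun h => le_antisymm h (hd.2.1.ge.trans (hFG d hd.1))
  tfae_finish

end FixedPoints

section Kantorovich

variable {X : Type*} [Fintype X] {d e ω : X × X → ℝ} {μ ν : X → ℝ}

/-- The optimal transport cost between `μ` and `ν` for the cost function `d`, that is, the
Kantorovich lifting of `d` to distributions. It is the junk value `0` if `μ` and `ν` have no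
coupling. -/
noncomputable def kantorovich (d : X × X → ℝ) (μ ν : X → ℝ) : ℝ :=
  ⨅ ω : {ω // IsCoupling ω μ ν}, ω.1 ⬝ᵥ d

theorem IsCoupling.dotProduct_nonneg (hω : IsCoupling ω μ ν) (hd : 0 ≤ d) : 0 ≤ ω ⬝ᵥ d :=
  dotProduct_nonneg_of_nonneg hω.1.1 hd

theorem bddBelow_range_coupling_dotProduct (hd : 0 ≤ d) :
    BddBelow (Set.range fun ω : {ω // IsCoupling ω μ ν} => ω.1 ⬝ᵥ d) :=
  ⟨0, Set.forall_mem_range.2 fun ω => ω.2.dotProduct_nonneg hd⟩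

theorem kantorovich_nonneg (hd : 0 ≤ d) : 0 ≤ kantorovich d μ ν :=
  Real.iInf_nonneg fun ω => ω.2.dotProduct_nonneg hd

theorem kantorovich_le_dotProduct (hω : IsCoupling ω μ ν) (hd : 0 ≤ d) :
    kantorovich d μ ν ≤ ω ⬝ᵥ d :=
  ciInf_le (bddBelow_range_coupling_dotProduct hd) ⟨ω, hω⟩

theorem kantorovich_mono (hd : 0 ≤ d) (hde : d ≤ e) : kantorovich d μ ν ≤ kantorovich e μ ν :=
  ciInf_mono (bddBelow_range_coupling_dotProduct hd) fun ω =>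
    dotProduct_le_dotProduct_of_nonneg_left hde ω.2.1.1

end Kantorovich

section BisimilarityDistance

variable {S L : Type*} [Fintype S] {ℓ : S → L} {τ : S → S → ℝ} {P : S × S → S × S → ℝ}

theorem deltaF_of_ne (d : S × S → ℝ) {p : S × S} (hp : ℓ p.1 ≠ ℓ p.2) : DeltaF ℓ τ d p = 1 :=
  if_pos hp

theorem deltaF_of_eq (d : S × S → ℝ) {p : S × S} (hp : ℓ p.1 = ℓ p.2) :
    DeltaF ℓ τ d p = kantorovich d (τ p.1) (τ p.2) := by
  have hrange : {r | ∃ ω, IsCoupling ω (τ p.1) (τ p.2) ∧ r = ∑ q, ω q * d q} =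
      Set.range fun ω : {ω // IsCoupling ω (τ p.1) (τ p.2)} => ω.1 ⬝ᵥ d := by
    ext r
    simp only [Set.mem_ofPred_eq, Set.mem_range, Subtype.exists, exists_prop, dotProduct,
      eq_comm (a := r)]
  rw [DeltaF, if_neg (not_not.2 hp), hrange, kantorovich, iInf]

theorem deltaF_nonneg {d : S × S → ℝ} (hd : 0 ≤ d) : 0 ≤ DeltaF ℓ τ d := by
  intro p
  by_cases hp : ℓ p.1 = ℓ p.2
  · exact (kantorovich_nonneg hd).trans_eq (deltaF_of_eq d hp).symm
  · exact zero_le_one.trans_eq (deltaF_of_ne d hp).symm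

theorem monotoneOn_deltaF : MonotoneOn (DeltaF ℓ τ) (Set.Ici 0) := by
  intro d hd e _ hde p
  by_cases hp : ℓ p.1 = ℓ p.2
  · simpa only [deltaF_of_eq _ hp] using kantorovich_mono hd hde
  · simp only [deltaF_of_ne _ hp, le_refl]

theorem IsPolicy.deltaF_le_gammaF (hP : IsPolicy ℓ τ P) {d : S × S → ℝ} (hd : 0 ≤ d) :
    DeltaF ℓ τ d ≤ GammaF ℓ P d := by
  intro p
  by_cases hp : ℓ p.1 = ℓ p.2
  · rw [deltaF_of_eq d hp, GammaF, if_neg (not_not.2 hp)]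
    exact kantorovich_le_dotProduct (hP.2.1 p hp) hd
  · rw [deltaF_of_ne d hp, GammaF, if_pos hp]

theorem optimal_policy_characterization_general (hP : IsPolicy ℓ τ P) {δ γ : S × S → ℝ}
    (hδ : IsLfpOn (DeltaF ℓ τ) δ) (hγ : IsLfpOn (GammaF ℓ P) γ) :
    [γ = δ, GammaF ℓ P δ = δ, GammaF ℓ P δ ≤ δ].TFAE :=
  hδ.tfae_eq_of_le hγ monotoneOn_deltaF (deltaF_nonneg le_rfl)
    fun _ hd => hP.deltaF_le_gammaF fun q => (hd q).1

end BisimilarityDistance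

/-- Proposition 20: a policy `P` is optimal (`γ_P = δ_τ`) iff `Γ_P(δ_τ) = δ_τ` iff
`Γ_P(δ_τ) ⊑ δ_τ`. -/
theorem optimal_policy_characterization {S L : Type*} [Fintype S] [Nonempty S] [Fintype L]
    (ℓ : S → L) (hℓ : ∃ a b : S, ℓ a ≠ ℓ b)
    (τ : S → S → ℝ) (hτ : IsTransFn τ)
    (P : S × S → S × S → ℝ) (hP : IsPolicy ℓ τ P)
    (δ γ : S × S → ℝ)
    (hδ : IsLfpOn (DeltaF ℓ τ) δ) (hγ : IsLfpOn (GammaF ℓ P) γ) :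
    (γ = δ ↔ GammaF ℓ P δ = δ) ∧
    (GammaF ℓ P δ = δ ↔ ∀ p, GammaF ℓ P δ p ≤ δ p) := by
  have h := optimal_policy_characterization_general hP hδ hγ
  exact ⟨h.out 0 1, h.out 1 2⟩
end

section
/- Fix a labelled Markov chain ⟨S, L, τ, ℓ⟩. Let P ∈ P_τ be an S²_Δ-closed policy and let C be a closed communication class of the induced Markov chain ⟨S×S, P⟩. Then C = {(s,t)} for some (s,t) ∈ S²_1, or C ⊆ S²_Δ, or C ⊆ S²_{0,τ}, where S²_{0,τ} = {(s,t) ∈ S×S | s ≠ t and s ∼ t}. -/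
open Finset Filter
open scoped Classical

/-!
A communication class that meets a closed set lies inside it, since every state of the class is
reachable from the point where they meet. For an `S²_Δ`-closed policy both the diagonal and every
singleton of `S²_1` are closed, which settles the classes meeting one of them. A closed class `C`
that avoids `S²_1` satisfies the transfer condition of a bisimulation, witnessed by the policy
itself. So does the equivalence relation it generates, because couplings can be composed: the
pairs with equal labels whose successor distributions are coupled inside an equivalence relation
again form an equivalence relation.
-/

section Couplings

variable {X : Type*}

/-- The coupling of `μ` with itself that is concentrated on the diagonal. -/
noncomputable def diagCoupling (μ : X → ℝ) (p : X × X) : ℝ :=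
  if p.1 = p.2 then μ p.1 else 0

theorem psupp_diagCoupling_subset (μ : X → ℝ) : psupp (diagCoupling μ) ⊆ SDelta X := by
  intro p hp
  by_contra hne
  exact (show 0 < diagCoupling μ p from hp).ne' (if_neg hne)

variable [Fintype X] {ω ω₁ ω₂ : X × X → ℝ} {μ ν ρ : X → ℝ}

namespace IsCoupling

theorem isDist_left (h : IsCoupling ω μ ν) : IsDist μ := by
  refine ⟨fun x => ?_, ?_⟩
  · rw [← h.2.1 x]
    exact Finset.sum_nonneg fun y _ => h.1.1 (x, y)
  · simp only [← h.2.1, ← Fintype.sum_prod_type, h.1.2]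

theorem of_marginals (hμ : IsDist μ) (hω : ∀ p, 0 ≤ ω p) (hfst : ∀ x, ∑ y, ω (x, y) = μ x)
    (hsnd : ∀ x, ∑ y, ω (y, x) = ν x) : IsCoupling ω μ ν :=
  ⟨⟨hω, by simpa only [Fintype.sum_prod_type, hfst] using hμ.2⟩, hfst, hsnd⟩

theorem symm (h : IsCoupling ω μ ν) : IsCoupling (ω ∘ Prod.swap) ν μ :=
  ⟨⟨fun p => h.1.1 p.swap, ((Equiv.prodComm X X).sum_comp ω).trans h.1.2⟩, h.2.2, h.2.1⟩

theorem eq_zero_of_left_eq_zero (h : IsCoupling ω μ ν) {x : X} (hx : μ x = 0) (y : X) :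
    ω (x, y) = 0 :=
  (Finset.sum_eq_zero_iff_of_nonneg fun z _ => h.1.1 (x, z)).mp ((h.2.1 x).trans hx) y
    (Finset.mem_univ y)

end IsCoupling

theorem isCoupling_diagCoupling (hμ : IsDist μ) : IsCoupling (diagCoupling μ) μ μ := by
  refine .of_marginals hμ (fun p => ?_) (fun x => ?_) fun x => ?_
  · unfold diagCoupling
    split_ifs
    exacts [hμ.1 p.1, le_rfl]
  all_goals simp [diagCoupling]

/-- The gluing of a coupling `ω₁` of `μ` and `ν` with a coupling `ω₂` of `ν` and `ρ`: given the
middle coordinate, the outer two are independent. Where `ν y = 0` the division gives the correct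
value `0`, as `ω₁` and `ω₂` put no mass on `y` there. -/
noncomputable def glueCoupling (ω₁ ω₂ : X × X → ℝ) (ν : X → ℝ) (p : X × X) : ℝ :=
  ∑ y, ω₁ (p.1, y) * ω₂ (y, p.2) / ν y

theorem glueCoupling_comp_swap (ω₁ ω₂ : X × X → ℝ) (ν : X → ℝ) :
    glueCoupling ω₁ ω₂ ν ∘ Prod.swap =
      glueCoupling (ω₂ ∘ Prod.swap) (ω₁ ∘ Prod.swap) ν := by
  funext p
  simp only [glueCoupling, Function.comp_apply, Prod.swap, mul_comm]

theorem sum_glueCoupling (h₁ : IsCoupling ω₁ μ ν) (h₂ : IsCoupling ω₂ ν ρ) (x : X) :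
    ∑ z, glueCoupling ω₁ ω₂ ν (x, z) = μ x :=
  calc
    ∑ z, ∑ y, ω₁ (x, y) * ω₂ (y, z) / ν y = ∑ y, ω₁ (x, y) * ν y / ν y := by
      rw [Finset.sum_comm]
      simp only [← Finset.sum_div, ← Finset.mul_sum, h₂.2.1]
    _ = ∑ y, ω₁ (x, y) :=
      Finset.sum_congr rfl fun y _ =>
        mul_div_cancel_of_imp fun hy => h₁.symm.eq_zero_of_left_eq_zero hy x
    _ = μ x := h₁.2.1 x

theorem IsCoupling.glue (h₁ : IsCoupling ω₁ μ ν) (h₂ : IsCoupling ω₂ ν ρ) :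
    IsCoupling (glueCoupling ω₁ ω₂ ν) μ ρ := by
  refine .of_marginals h₁.isDist_left (fun p => ?_) (sum_glueCoupling h₁ h₂) fun z => ?_
  · exact Finset.sum_nonneg fun y _ =>
      div_nonneg (mul_nonneg (h₁.1.1 _) (h₂.1.1 _)) (h₂.isDist_left.1 y)
  · change ∑ x, (glueCoupling ω₁ ω₂ ν ∘ Prod.swap) (z, x) = ρ z
    rw [glueCoupling_comp_swap]
    exact sum_glueCoupling h₂.symm h₁.symm z

theorem exists_mem_psupp_of_mem_psupp_glueCoupling (hω₁ : ∀ p, 0 ≤ ω₁ p) (hω₂ : ∀ p, 0 ≤ ω₂ p)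
    {x z : X} (h : (x, z) ∈ psupp (glueCoupling ω₁ ω₂ ν)) :
    ∃ y, (x, y) ∈ psupp ω₁ ∧ (y, z) ∈ psupp ω₂ := by
  have hpos : 0 < ∑ y, ω₁ (x, y) * ω₂ (y, z) / ν y := h
  obtain ⟨y, -, hy⟩ := Finset.exists_ne_zero_of_sum_ne_zero hpos.ne'
  have hmul : ω₁ (x, y) * ω₂ (y, z) ≠ 0 := (div_ne_zero_iff.mp hy).1
  exact ⟨y, (hω₁ _).lt_of_ne' (left_ne_zero_of_mul hmul),
    (hω₂ _).lt_of_ne' (right_ne_zero_of_mul hmul)⟩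

end Couplings

section CouplingLift

variable {X : Type*} [Fintype X] {R R' : Set (X × X)} {μ ν ρ : X → ℝ}

/-- The lifting of a relation `R` on `X` to distributions on `X`: some coupling of `μ` and `ν` is
supported in `R`. A bisimulation relates only states whose successor distributions are related by
its lifting. -/
def CouplingLift (R : Set (X × X)) (μ ν : X → ℝ) : Prop :=
  ∃ ω, IsCoupling ω μ ν ∧ psupp ω ⊆ R

namespace CouplingLift

theorem mono (hRR' : R ⊆ R') : CouplingLift R μ ν → CouplingLift R' μ ν
  | ⟨ω, hω, hsupp⟩ => ⟨ω, hω, hsupp.trans hRR'⟩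

theorem refl (hR : ∀ x, (x, x) ∈ R) (hμ : IsDist μ) : CouplingLift R μ μ := by
  refine ⟨diagCoupling μ, isCoupling_diagCoupling hμ, ?_⟩
  rintro ⟨x, y⟩ hp
  obtain rfl : x = y := psupp_diagCoupling_subset μ hp
  exact hR x

theorem symm (hR : ∀ {x y}, (x, y) ∈ R → (y, x) ∈ R) :
    CouplingLift R μ ν → CouplingLift R ν μ
  | ⟨ω, hω, hsupp⟩ => ⟨ω ∘ Prod.swap, hω.symm, fun _ hp => hR (hsupp hp)⟩

theorem trans (hR : ∀ {x y z}, (x, y) ∈ R → (y, z) ∈ R → (x, z) ∈ R) :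
    CouplingLift R μ ν → CouplingLift R ν ρ → CouplingLift R μ ρ := by
  rintro ⟨ω₁, hω₁, hsupp₁⟩ ⟨ω₂, hω₂, hsupp₂⟩
  refine ⟨glueCoupling ω₁ ω₂ ν, hω₁.glue hω₂, fun p hp => ?_⟩
  obtain ⟨y, hy₁, hy₂⟩ := exists_mem_psupp_of_mem_psupp_glueCoupling hω₁.1.1 hω₂.1.1 hp
  exact hR (hsupp₁ hy₁) (hsupp₂ hy₂)

end CouplingLift

end CouplingLift

section Bisimulation

variable {S L : Type*} [Fintype S] {ℓ : S → L} {τ : S → S → ℝ} {R : Set (S × S)}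

theorem equivalence_label_eq_and_couplingLift (ℓ : S → L) (hτ : IsTransFn τ)
    (hR : Equivalence fun s t => (s, t) ∈ R) :
    Equivalence fun s t => ℓ s = ℓ t ∧ CouplingLift R (τ s) (τ t) where
  refl s := ⟨rfl, .refl hR.refl (hτ s)⟩
  symm h := ⟨h.1.symm, h.2.symm hR.symm⟩
  trans h₁ h₂ := ⟨h₁.1.trans h₂.1, h₁.2.trans hR.trans h₂.2⟩

theorem isBisim_eqvGen (hτ : IsTransFn τ)
    (hR : ∀ p ∈ R, ℓ p.1 = ℓ p.2 ∧ CouplingLift R (τ p.1) (τ p.2)) :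
    IsBisim ℓ τ {p | Relation.EqvGen (fun s t => (s, t) ∈ R) p.1 p.2} := by
  set E : Set (S × S) := {p | Relation.EqvGen (fun s t => (s, t) ∈ R) p.1 p.2}
  have hE : Equivalence fun s t => (s, t) ∈ E := Relation.EqvGen.is_equivalence _
  have hRE : R ⊆ E := fun p hp => .rel p.1 p.2 hp
  refine ⟨hE, fun p hp => ?_⟩
  refine (equivalence_label_eq_and_couplingLift ℓ hτ hE).eqvGen_iff.mp (hp.mono fun s t hst => ?_)
  exact ⟨(hR (s, t) hst).1, (hR (s, t) hst).2.mono hRE⟩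

theorem bisimilar_of_mem (hτ : IsTransFn τ)
    (hR : ∀ p ∈ R, ℓ p.1 = ℓ p.2 ∧ CouplingLift R (τ p.1) (τ p.2)) {p : S × S} (hp : p ∈ R) :
    Bisimilar ℓ τ p.1 p.2 :=
  ⟨_, isBisim_eqvGen hτ hR, .rel p.1 p.2 hp⟩

end Bisimulation

section ClosedSets

variable {S : Type*} {P : S × S → S × S → ℝ} {C D : Set (S × S)}

theorem Reach.mem_of_isClosedClass {p q : S × S} (hpq : Reach P p q) (hD : IsClosedClass P D)
    (hp : p ∈ D) : q ∈ D := by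
  induction hpq with
  | refl => exact hp
  | tail _ hstep hmem => exact hD _ hmem hstep

theorem IsCommClass.reach (hC : IsCommClass P C) {p q : S × S} (hp : p ∈ C) (hq : q ∈ C) :
    Reach P p q := by
  obtain ⟨c, rfl⟩ := hC
  exact hp.2.trans hq.1

theorem IsCommClass.subset_of_isClosedClass (hC : IsCommClass P C) (hD : IsClosedClass P D)
    (hCD : (C ∩ D).Nonempty) : C ⊆ D := by
  obtain ⟨p, hpC, hpD⟩ := hCD
  exact fun q hq => (hC.reach hpC hq).mem_of_isClosedClass hD hpD

theorem DeltaClosed.isClosedClass_SDelta (hP : DeltaClosed P) : IsClosedClass P (SDelta S) := by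
  rintro ⟨s, t⟩ hst
  obtain rfl : s = t := hst
  exact hP s

theorem IsPolicy.isClosedClass_singleton {L : Type*} [Fintype S] {ℓ : S → L} {τ : S → S → ℝ}
    (hP : IsPolicy ℓ τ P) {p : S × S} (hp : ℓ p.1 ≠ ℓ p.2) : IsClosedClass P {p} := by
  rintro _ rfl
  exact (hP.2.2 _ hp).subset

end ClosedSets

/-- Proposition 21: every closed communication class of the Markov chain induced by an
`S²_Δ`-closed policy is a singleton in `S²_1`, or included in `S²_Δ`, or included in
`S²_{0,τ}` (distinct bisimilar pairs). -/
theorem closed_communication_class_cases {S L : Type*} [Fintype S] [Nonempty S] [Fintype L]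
    (ℓ : S → L) (hℓ : ∃ a b : S, ℓ a ≠ ℓ b)
    (τ : S → S → ℝ) (hτ : IsTransFn τ)
    (P : S × S → S × S → ℝ) (hP : IsPolicy ℓ τ P) (hPc : DeltaClosed P)
    (C : Set (S × S)) (hC : IsCommClass P C) (hCc : IsClosedClass P C) :
    (∃ p : S × S, ℓ p.1 ≠ ℓ p.2 ∧ C = {p}) ∨
    C ⊆ SDelta S ∨
    (∀ p ∈ C, p.1 ≠ p.2 ∧ Bisimilar ℓ τ p.1 p.2) := by
  by_cases hlabel : ∃ p ∈ C, ℓ p.1 ≠ ℓ p.2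
  · obtain ⟨p, hpC, hp⟩ := hlabel
    have hsub : C ⊆ {p} :=
      hC.subset_of_isClosedClass (hP.isClosedClass_singleton hp) ⟨p, hpC, rfl⟩
    exact .inl ⟨p, hp, hsub.antisymm (Set.singleton_subset_iff.mpr hpC)⟩
  by_cases hdiag : (C ∩ SDelta S).Nonempty
  · exact .inr (.inl (hC.subset_of_isClosedClass hPc.isClosedClass_SDelta hdiag))
  push Not at hlabel
  have htransfer : ∀ p ∈ C, ℓ p.1 = ℓ p.2 ∧ CouplingLift C (τ p.1) (τ p.2) := fun p hp =>
    ⟨hlabel p hp, P p, hP.2.1 p (hlabel p hp), hCc p hp⟩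
  exact .inr (.inr fun p hp => ⟨fun heq => hdiag ⟨p, hp, heq⟩, bisimilar_of_mem hτ htransfer hp⟩)
end

section
/- Fix a labelled Markov chain ⟨S, L, τ, ℓ⟩. For all states s, t ∈ S, if s ≃ t (s and t are robustly probabilistically bisimilar), then the function σ ↦ δ_σ(s,t) is continuous at τ: for every sequence (τ_n) of transition probability functions converging to τ (in the metric d_F), lim_n δ_{τ_n}(s,t) = 0 = δ_τ(s,t). -/
open Finset Filter
open scoped Classical

/-!
Let `ρ` be the probability that a policy `P` for `τ` reaches the diagonal, and let `T p` be a
multiple of the (truncated) expected time to do so on the event that it is done at all, scaled so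
that one step of `P` decreases `T` by at least one wherever `ρ > 0`. The function `1 - ρ` is
harmonic for `P` off the diagonal. Replacing `τ` by `σ` changes the couplings used by `P` by
`O(dF σ τ)`, a loss which the decrease of a suitable multiple of `dF σ τ * T` absorbs. Hence
`1 - ρ + C * dF σ τ * T`, capped at `1`, is a prefixed point of `DeltaF ℓ σ` and so bounds the
distance for `σ`. Where `ρ = 1` the bound is linear in `dF σ τ`.
-/

/-- In place of the least fixed point one may compare with any prefixed point (Knaster–Tarski). -/
theorem IsLfpOn.le_of_prefixed {A : Type*} {F : (A → ℝ) → A → ℝ} {d e : A → ℝ}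
    (hd : IsLfpOn F d) (hmaps : Set.MapsTo F {f | Is01 f} {f | Is01 f})
    (hmono : MonotoneOn F {f | Is01 f}) (he : Is01 e) (hFe : F e ≤ e) : d ≤ e := by
  have : Fact ((0 : ℝ) ≤ 1) := ⟨zero_le_one⟩
  let G : (A → Set.Icc (0 : ℝ) 1) →o (A → Set.Icc (0 : ℝ) 1) :=
    { toFun f a := ⟨F (fun b => f b) a, hmaps (fun b => (f b).2) a⟩
      monotone' f g hfg a := hmono (fun b => (f b).2) (fun b => (g b).2) hfg a }
  have hfix : F (fun a => G.lfp a) = fun a => (G.lfp a : ℝ) :=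
    funext fun a => congrArg Subtype.val (congrFun G.map_lfp a)
  have hle : G.lfp ≤ fun a => ⟨e a, he a⟩ := G.lfp_le hFe
  exact fun a => (hd.2.2 _ (fun a => (G.lfp a).2) hfix a).trans (hle a)

section Distributions

variable {X : Type*} [Fintype X] {μ : X → ℝ} {d e : X → ℝ}

theorem IsDist.sum_mul_mem_Icc (hμ : IsDist μ) (hd : Is01 d) :
    ∑ x, μ x * d x ∈ Set.Icc (0 : ℝ) 1 := by
  refine ⟨sum_nonneg fun x _ => mul_nonneg (hμ.1 x) (hd x).1, ?_⟩
  rw [← hμ.2]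
  exact sum_le_sum fun x _ => mul_le_of_le_one_right (hμ.1 x) (hd x).2

theorem IsDist.sum_mul_le_sum_mul (hμ : IsDist μ) (h : d ≤ e) :
    ∑ x, μ x * d x ≤ ∑ x, μ x * e x :=
  sum_le_sum fun x _ => mul_le_mul_of_nonneg_left (h x) (hμ.1 x)

theorem abs_sub_le_dF {Y : Type*} [Finite Y] (f g : Y → X → ℝ) (y : Y) (x : X) :
    |f y x - g y x| ≤ dF f g :=
  calc |f y x - g y x| ≤ dTV (f y) (g y) :=
        le_ciSup (f := fun x => |f y x - g y x|) (Set.finite_range _).bddAbove x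
    _ ≤ dF f g := le_ciSup (f := fun y => dTV (f y) (g y)) (Set.finite_range _).bddAbove y

theorem sum_abs_sub_le_card_mul_dF {Y : Type*} [Finite Y] (f g : Y → X → ℝ) (y : Y) :
    ∑ x, |f y x - g y x| ≤ Fintype.card X * dF f g := by
  simpa using sum_le_sum fun x (_ : x ∈ univ) => abs_sub_le_dF f g y x

theorem dF_nonneg {Y : Type*} (f g : Y → X → ℝ) : 0 ≤ dF f g :=
  Real.iSup_nonneg fun _ => Real.iSup_nonneg fun _ => abs_nonneg _

theorem dF_self {Y : Type*} (f : Y → X → ℝ) : dF f f = 0 := by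
  simp [dF, dTV]

end Distributions

section Couplings

variable {X : Type*} [Fintype X] {μ ν μ' ν' : X → ℝ} {ω : X × X → ℝ}

theorem IsCoupling.fst_nonneg (hω : IsCoupling ω μ ν) (x : X) : 0 ≤ μ x :=
  hω.2.1 x ▸ sum_nonneg fun _ _ => hω.1.1 _

theorem IsCoupling.snd_nonneg (hω : IsCoupling ω μ ν) (x : X) : 0 ≤ ν x :=
  hω.2.2 x ▸ sum_nonneg fun _ _ => hω.1.1 _

theorem IsCoupling.sum_mul_fst (hω : IsCoupling ω μ ν) (f : X → ℝ) :
    ∑ q, ω q * f q.1 = ∑ x, μ x * f x := by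
  simp only [Fintype.sum_prod_type, ← sum_mul, hω.2.1]

theorem IsCoupling.sum_mul_snd (hω : IsCoupling ω μ ν) (f : X → ℝ) :
    ∑ q, ω q * f q.2 = ∑ x, ν x * f x := by
  simp only [Fintype.sum_prod_type_right, ← sum_mul, hω.2.2]

theorem IsDist.isCoupling_diagonal (hμ : IsDist μ) :
    IsCoupling (fun q : X × X => if q.1 = q.2 then μ q.1 else 0) μ μ := by
  refine ⟨⟨fun q => ?_, ?_⟩, fun x => ?_, fun x => ?_⟩
  · dsimp only
    split_ifs
    exacts [hμ.1 _, le_rfl]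
  · simpa [Fintype.sum_prod_type] using hμ.2
  all_goals simp

/-- A subcoupling is completed by the scaled product of the residual marginals. -/
theorem exists_isCoupling_ge {w : X × X → ℝ} (hμ : IsDist μ) (hν : IsDist ν) (hw : 0 ≤ w)
    (hfst : ∀ x, ∑ y, w (x, y) ≤ μ x) (hsnd : ∀ y, ∑ x, w (x, y) ≤ ν y) :
    ∃ ω, IsCoupling ω μ ν ∧ w ≤ ω := by
  set m : ℝ := 1 - ∑ q, w q with hm
  set α : X → ℝ := fun x => μ x - ∑ y, w (x, y) with hα
  set β : X → ℝ := fun y => ν y - ∑ x, w (x, y) with hβ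
  have hα0 : ∀ x, 0 ≤ α x := fun x => sub_nonneg.2 (hfst x)
  have hβ0 : ∀ y, 0 ≤ β y := fun y => sub_nonneg.2 (hsnd y)
  have hαm : ∑ x, α x = m := by
    simp only [hα, hm, sum_sub_distrib, hμ.2, Fintype.sum_prod_type]
  have hβm : ∑ y, β y = m := by
    simp only [hβ, hm, sum_sub_distrib, hν.2, Fintype.sum_prod_type_right]
  have hm0 : 0 ≤ m := hαm ▸ sum_nonneg fun x _ => hα0 x
  have cancel : ∀ f : X → ℝ, (∀ x, 0 ≤ f x) → ∑ x, f x = m → ∀ x, f x * m / m = f x :=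
    fun f hf hfm x => mul_div_cancel_of_imp fun h =>
      (sum_eq_zero_iff_of_nonneg fun x _ => hf x).1 (hfm.trans h) x (mem_univ x)
  have hr : ∀ q : X × X, 0 ≤ α q.1 * β q.2 / m := fun q =>
    div_nonneg (mul_nonneg (hα0 _) (hβ0 _)) hm0
  have hr1 : ∀ x, ∑ y, α x * β y / m = α x := fun x => by
    rw [← sum_div, ← mul_sum, hβm, cancel α hα0 hαm]
  have hr2 : ∀ y, ∑ x, α x * β y / m = β y := fun y => by
    rw [← sum_div, ← sum_mul, hαm, mul_comm, cancel β hβ0 hβm]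
  have hrm : ∑ q : X × X, α q.1 * β q.2 / m = m := by
    simp only [Fintype.sum_prod_type, hr1, hαm]
  refine ⟨fun q => w q + α q.1 * β q.2 / m,
    ⟨⟨fun q => add_nonneg (hw q) (hr q), ?_⟩, fun x => ?_, fun y => ?_⟩,
    fun q => le_add_of_nonneg_right (hr q)⟩
  · rw [sum_add_distrib, hrm, hm, add_sub_cancel]
  · rw [sum_add_distrib, hr1, add_sub_cancel]
  · rw [sum_add_distrib, hr2, add_sub_cancel]

theorem IsDist.exists_isCoupling (hμ : IsDist μ) (hν : IsDist ν) : ∃ ω, IsCoupling ω μ ν := by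
  obtain ⟨ω, hω, -⟩ := exists_isCoupling_ge hμ hν (w := 0) le_rfl
    (by simpa using hμ.1) (by simpa using hν.1)
  exact ⟨ω, hω⟩

theorem exists_mem_Icc_mul_eq_min {K : Type*} [Field K] [LinearOrder K] [IsStrictOrderedRing K]
    {a b : K} (ha : 0 ≤ a) (hb : 0 ≤ b) : ∃ c ∈ Set.Icc (0 : K) 1, a * c = min a b :=
  ⟨min a b / a, ⟨div_nonneg (le_min ha hb) ha, div_le_one_of_le₀ (min_le_left a b) ha⟩,
    mul_div_cancel_of_imp' fun h => by rw [h, min_eq_left hb]⟩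

theorem sub_min_le_abs_sub {G : Type*} [AddCommGroup G] [LinearOrder G] [IsOrderedAddMonoid G]
    (a b : G) : a - min a b ≤ |b - a| := by
  rcases min_cases a b with ⟨h, -⟩ | ⟨h, -⟩ <;> rw [h]
  · simp
  · exact abs_sub_comm a b ▸ le_abs_self _

theorem IsCoupling.exists_subcoupling (hω : IsCoupling ω μ ν) (hμ' : 0 ≤ μ') (hν' : 0 ≤ ν') :
    ∃ w : X × X → ℝ, 0 ≤ w ∧ w ≤ ω ∧ (∀ x, ∑ y, w (x, y) ≤ μ' x) ∧
      (∀ y, ∑ x, w (x, y) ≤ ν' y) ∧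
      1 - ∑ q, w q ≤ ∑ x, |μ' x - μ x| + ∑ x, |ν' x - ν x| := by
  choose a ha hμa using fun x => exists_mem_Icc_mul_eq_min (hω.fst_nonneg x) (hμ' x)
  choose b hb hνb using fun x => exists_mem_Icc_mul_eq_min (hω.snd_nonneg x) (hν' x)
  have hωa : ∀ q, 0 ≤ ω q * a q.1 := fun q => mul_nonneg (hω.1.1 q) (ha q.1).1
  have hle_fst : ∀ q, ω q * a q.1 * b q.2 ≤ ω q * a q.1 := fun q =>
    mul_le_of_le_one_right (hωa q) (hb q.2).2
  have hle_snd : ∀ q, ω q * a q.1 * b q.2 ≤ ω q * b q.2 := fun q =>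
    mul_le_mul_of_nonneg_right (mul_le_of_le_one_right (hω.1.1 q) (ha q.1).2) (hb q.2).1
  refine ⟨fun q => ω q * a q.1 * b q.2, fun q => mul_nonneg (hωa q) (hb q.2).1, fun q =>
    (hle_fst q).trans (mul_le_of_le_one_right (hω.1.1 q) (ha q.1).2), fun x => ?_, fun y => ?_, ?_⟩
  · calc ∑ y, ω (x, y) * a x * b y ≤ ∑ y, ω (x, y) * a x := sum_le_sum fun y _ => hle_fst (x, y)
      _ = min (μ x) (μ' x) := by rw [← sum_mul, hω.2.1, hμa]
      _ ≤ μ' x := min_le_right _ _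
  · calc ∑ x, ω (x, y) * a x * b y ≤ ∑ x, ω (x, y) * b y := sum_le_sum fun x _ => hle_snd (x, y)
      _ = min (ν y) (ν' y) := by rw [← sum_mul, hω.2.2, hνb]
      _ ≤ ν' y := min_le_right _ _
  · calc 1 - ∑ q, ω q * a q.1 * b q.2
        = ∑ q, (ω q - ω q * a q.1 * b q.2) := by rw [sum_sub_distrib, hω.1.2]
      _ ≤ ∑ q, ω q * (1 - a q.1) + ∑ q, ω q * (1 - b q.2) := by
          rw [← sum_add_distrib]
          refine sum_le_sum fun q _ => ?_
          have : 0 ≤ ω q * ((1 - a q.1) * (1 - b q.2)) := mul_nonneg (hω.1.1 q)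
            (mul_nonneg (sub_nonneg.2 (ha q.1).2) (sub_nonneg.2 (hb q.2).2))
          linarith
      _ = ∑ x, (μ x - min (μ x) (μ' x)) + ∑ x, (ν x - min (ν x) (ν' x)) := by
          rw [hω.sum_mul_fst (fun x => 1 - a x), hω.sum_mul_snd (fun x => 1 - b x)]
          simp only [mul_sub, mul_one, hμa, hνb]
      _ ≤ ∑ x, |μ' x - μ x| + ∑ x, |ν' x - ν x| := by
          gcongr <;> exact sub_min_le_abs_sub _ _

theorem IsCoupling.exists_isCoupling_sum_mul_le (hω : IsCoupling ω μ ν) (hμ' : IsDist μ')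
    (hν' : IsDist ν') :
    ∃ ω', IsCoupling ω' μ' ν' ∧ ∀ d, Is01 d →
      ∑ q, ω' q * d q ≤ ∑ q, ω q * d q + (∑ x, |μ' x - μ x| + ∑ x, |ν' x - ν x|) := by
  obtain ⟨w, hw0, hwω, hfst, hsnd, hdefect⟩ := hω.exists_subcoupling hμ'.1 hν'.1
  obtain ⟨ω', hω', hwω'⟩ := exists_isCoupling_ge hμ' hν' hw0 hfst hsnd
  refine ⟨ω', hω', fun d hd => ?_⟩
  calc ∑ q, ω' q * d q ≤ ∑ q, (ω q * d q + (ω' q - w q)) := sum_le_sum fun q _ => by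
        have h₁ := mul_le_mul_of_nonneg_right (hwω q) (hd q).1
        have h₂ := mul_le_of_le_one_right (sub_nonneg.2 (hwω' q)) (hd q).2
        linarith
    _ = ∑ q, ω q * d q + (1 - ∑ q, w q) := by
        rw [sum_add_distrib, sum_sub_distrib, hω'.1.2]
    _ ≤ _ := by gcongr

end Couplings

section Distance

variable {S L : Type*} [Fintype S] {ℓ : S → L} {τ : S → S → ℝ} {d : S × S → ℝ}

theorem deltaF_le_sum_mul (hd : Is01 d) {p : S × S} (hp : ℓ p.1 = ℓ p.2) {ω : S × S → ℝ}
    (hω : IsCoupling ω (τ p.1) (τ p.2)) : DeltaF ℓ τ d p ≤ ∑ q, ω q * d q := by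
  rw [DeltaF, if_neg (not_not.2 hp)]
  refine csInf_le ⟨0, ?_⟩ ⟨ω, hω, rfl⟩
  rintro _ ⟨ω', hω', rfl⟩
  exact (hω'.1.sum_mul_mem_Icc hd).1

theorem IsTransFn.le_deltaF (hτ : IsTransFn τ) {p : S × S} (hp : ℓ p.1 = ℓ p.2) {r : ℝ}
    (h : ∀ ω, IsCoupling ω (τ p.1) (τ p.2) → r ≤ ∑ q, ω q * d q) : r ≤ DeltaF ℓ τ d p := by
  obtain ⟨ω, hω⟩ := (hτ p.1).exists_isCoupling (hτ p.2)
  rw [DeltaF, if_neg (not_not.2 hp)]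
  refine le_csInf ⟨_, ω, hω, rfl⟩ ?_
  rintro _ ⟨ω', hω', rfl⟩
  exact h ω' hω'

theorem deltaF_of_label_ne {p : S × S} (hp : ℓ p.1 ≠ ℓ p.2) : DeltaF ℓ τ d p = 1 :=
  if_pos hp

theorem IsTransFn.mapsTo_deltaF (hτ : IsTransFn τ) :
    Set.MapsTo (DeltaF ℓ τ) {d | Is01 d} {d | Is01 d} := by
  intro d hd p
  by_cases hp : ℓ p.1 = ℓ p.2
  · obtain ⟨ω, hω⟩ := (hτ p.1).exists_isCoupling (hτ p.2)
    exact ⟨hτ.le_deltaF hp fun ω' hω' => (hω'.1.sum_mul_mem_Icc hd).1,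
      (deltaF_le_sum_mul hd hp hω).trans (hω.1.sum_mul_mem_Icc hd).2⟩
  · simp [deltaF_of_label_ne hp]

theorem IsTransFn.monotoneOn_deltaF (hτ : IsTransFn τ) :
    MonotoneOn (DeltaF ℓ τ) {d | Is01 d} := by
  intro d hd e _ hde p
  by_cases hp : ℓ p.1 = ℓ p.2
  · exact hτ.le_deltaF hp fun ω hω =>
      (deltaF_le_sum_mul hd hp hω).trans (hω.1.sum_mul_le_sum_mul hde)
  · simp [deltaF_of_label_ne hp]

theorem IsTransFn.deltaF_diag_nonpos (hτ : IsTransFn τ) (hd : Is01 d)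
    (hdiag : ∀ s, d (s, s) = 0) (s : S) : DeltaF ℓ τ d (s, s) ≤ 0 := by
  refine (deltaF_le_sum_mul hd rfl (hτ s).isCoupling_diagonal).trans_eq ?_
  refine sum_eq_zero fun ⟨x, y⟩ _ => ?_
  by_cases h : x = y <;> simp [h, hdiag]

end Distance

section Reachability

variable {S : Type*} [Fintype S] {P : S × S → S × S → ℝ} {ρ e : S × S → ℝ} {p : S × S}

theorem reachF_of_eq (hp : p.1 = p.2) : ReachF P e p = 1 :=
  if_pos hp

theorem reachF_of_ne (hp : p.1 ≠ p.2) : ReachF P e p = ∑ q, P p q * e q :=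
  if_neg hp

theorem mapsTo_reachF (hP : ∀ p, IsDist (P p)) :
    Set.MapsTo (ReachF P) {d | Is01 d} {d | Is01 d} := by
  intro d hd p
  by_cases hp : p.1 = p.2
  · simp [reachF_of_eq hp]
  · exact reachF_of_ne hp ▸ (hP p).sum_mul_mem_Icc hd

theorem monotone_reachF (hP : ∀ p, IsDist (P p)) : Monotone (ReachF P) := by
  intro d e hde p
  by_cases hp : p.1 = p.2
  · simp [reachF_of_eq hp]
  · simpa only [reachF_of_ne hp] using (hP p).sum_mul_le_sum_mul hde

theorem IsLfpOn.reach_of_eq (hρ : IsLfpOn (ReachF P) ρ) (hp : p.1 = p.2) : ρ p = 1 := by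
  rw [← hρ.2.1, reachF_of_eq hp]

theorem IsLfpOn.sum_mul_reach_of_ne (hρ : IsLfpOn (ReachF P) ρ) (hp : p.1 ≠ p.2) :
    ∑ q, P p q * ρ q = ρ p := by
  rw [← reachF_of_ne hp, hρ.2.1]

/-- The probability of reaching the diagonal in fewer than `n` steps of `⟨S × S, P⟩`: the Kleene
iterates approximating the reachability probability from below. -/
noncomputable def reachWithin (P : S × S → S × S → ℝ) (n : ℕ) : S × S → ℝ :=
  (ReachF P)^[n] 0

theorem reachWithin_succ (P : S × S → S × S → ℝ) (n : ℕ) :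
    reachWithin P (n + 1) = ReachF P (reachWithin P n) :=
  Function.iterate_succ_apply' _ _ _

theorem reachWithin_succ_of_ne (hp : p.1 ≠ p.2) (n : ℕ) :
    reachWithin P (n + 1) p = ∑ q, P p q * reachWithin P n q := by
  rw [reachWithin_succ, reachF_of_ne hp]

theorem reachWithin_one_of_ne (hp : p.1 ≠ p.2) : reachWithin P 1 p = 0 := by
  rw [reachWithin_succ_of_ne hp]
  simp [reachWithin]

theorem monotone_reachWithin (hP : ∀ p, IsDist (P p)) : Monotone (reachWithin P) := by
  refine (monotone_reachF hP).monotone_iterate_of_le_map fun p => ?_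
  by_cases hp : p.1 = p.2
  · simp [reachF_of_eq hp]
  · simp [reachF_of_ne hp]

theorem reachWithin_nonneg (hP : ∀ p, IsDist (P p)) (n : ℕ) : 0 ≤ reachWithin P n :=
  monotone_reachWithin hP n.zero_le

theorem IsLfpOn.reachWithin_le (hρ : IsLfpOn (ReachF P) ρ) (hP : ∀ p, IsDist (P p)) (n : ℕ) :
    reachWithin P n ≤ ρ := by
  induction n with
  | zero => exact fun p => (hρ.1 p).1
  | succ n ih =>
    rw [reachWithin_succ, ← hρ.2.1]
    exact monotone_reachF hP ih

/-- The indicator of the pairs that reach the diagonal in finitely many steps is a prefixed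
point. -/
theorem IsLfpOn.exists_reachWithin_pos (hρ : IsLfpOn (ReachF P) ρ) (hP : ∀ p, IsDist (P p))
    (hp : 0 < ρ p) : ∃ n, 0 < reachWithin P n p := by
  let e : S × S → ℝ := fun p => if ∃ n, 0 < reachWithin P n p then 1 else 0
  have he : Is01 e := fun p => by dsimp only [e]; split_ifs <;> norm_num
  have hpre : ReachF P e ≤ e := by
    intro p
    by_cases hreach : ∃ n, 0 < reachWithin P n p
    · exact ((mapsTo_reachF hP he) p).2.trans_eq (if_pos hreach).symm
    have hne : p.1 ≠ p.2 := fun h =>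
      hreach ⟨1, by rw [reachWithin_succ, reachF_of_eq h]; exact one_pos⟩
    rw [reachF_of_ne hne]
    refine (sum_nonpos fun q _ => ?_).trans (he p).1
    rcases ((hP p).1 q).eq_or_lt with hq | hq
    · simp [← hq]
    have hq' : ¬ ∃ n, 0 < reachWithin P n q := fun ⟨n, hn⟩ => hreach ⟨n + 1, by
      rw [reachWithin_succ_of_ne hne]
      exact sum_pos' (fun r _ => mul_nonneg ((hP p).1 r) (reachWithin_nonneg hP n r))
        ⟨q, mem_univ q, mul_pos hq hn⟩⟩
    simp only [e, if_neg hq', mul_zero, le_refl]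
  by_contra hreach
  have hρe := hρ.le_of_prefixed (mapsTo_reachF hP) ((monotone_reachF hP).monotoneOn _) he hpre p
  exact (hp.trans_le hρe).ne' (if_neg hreach)

theorem IsLfpOn.exists_forall_reachWithin_pos (hρ : IsLfpOn (ReachF P) ρ)
    (hP : ∀ p, IsDist (P p)) : ∃ n, ∀ p ∈ psupp ρ, 0 < reachWithin P n p := by
  have h : ∀ᶠ n in atTop, ∀ p, p ∈ psupp ρ → 0 < reachWithin P n p := by
    refine eventually_all.2 fun p => ?_
    by_cases hp : p ∈ psupp ρ
    · obtain ⟨m, hm⟩ := hρ.exists_reachWithin_pos hP hp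
      filter_upwards [eventually_ge_atTop m] with n hn _
      exact hm.trans_le (monotone_reachWithin hP hn p)
    · exact .of_forall fun _ h => absurd h hp
  exact h.exists

/-- A Foster–Lyapunov function for hitting the diagonal in `⟨S × S, P⟩`: it vanishes on the
diagonal, and one step from an off-diagonal pair of `A` decreases its mean by at least one. -/
structure IsLyapunovOn (P : S × S → S × S → ℝ) (A : Set (S × S)) (T : S × S → ℝ) : Prop where
  nonneg : 0 ≤ T
  diag : ∀ s, T (s, s) = 0
  drift : ∀ p ∈ A, p.1 ≠ p.2 → 1 + ∑ q, P p q * T q ≤ T p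

theorem IsLfpOn.sum_mul_sum_sub_reachWithin (hρ : IsLfpOn (ReachF P) ρ) (hp : p.1 ≠ p.2) (N : ℕ) :
    ∑ q, P p q * ∑ n ∈ range N, (ρ q - reachWithin P (n + 1) q) =
      ∑ n ∈ range N, (ρ p - reachWithin P (n + 1) p) - reachWithin P (N + 1) p := by
  have hstep : ∀ n, ∑ q, P p q * (ρ q - reachWithin P (n + 1) q) =
      ρ p - reachWithin P (n + 2) p := fun n => by
    simp only [mul_sub, sum_sub_distrib, hρ.sum_mul_reach_of_ne hp, reachWithin_succ_of_ne hp]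
  have htelescope := sum_range_sub (fun n => reachWithin P (n + 1) p) N
  rw [reachWithin_one_of_ne hp, sub_zero] at htelescope
  simp only [mul_sum]
  rw [sum_comm]
  simp only [hstep, ← htelescope, ← sum_sub_distrib, sub_sub, add_sub_cancel]

/-- The witness is a multiple of the time needed to reach the diagonal, truncated at `N` and
averaged over the event that the diagonal is reached. -/
theorem IsLfpOn.exists_isLyapunovOn_psupp (hρ : IsLfpOn (ReachF P) ρ) (hP : ∀ p, IsDist (P p)) :
    ∃ T, IsLyapunovOn P (psupp ρ) T := by
  obtain ⟨N, hN⟩ := hρ.exists_forall_reachWithin_pos hP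
  set K : ℝ := ∑ p, (reachWithin P (N + 1) p)⁻¹
  have hinv : ∀ p, 0 ≤ (reachWithin P (N + 1) p)⁻¹ := fun p =>
    inv_nonneg.2 (reachWithin_nonneg hP _ p)
  refine ⟨fun p => K * ∑ n ∈ range N, (ρ p - reachWithin P (n + 1) p),
    fun p => mul_nonneg (sum_nonneg fun p _ => hinv p) (sum_nonneg fun n _ =>
      sub_nonneg.2 (hρ.reachWithin_le hP _ p)), fun s => ?_, fun p hp hne => ?_⟩
  · simp [hρ.reach_of_eq, reachWithin_succ, reachF_of_eq]
  · have hpos : 0 < reachWithin P (N + 1) p :=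
      (hN p hp).trans_le (monotone_reachWithin hP N.le_succ p)
    have hK : 1 ≤ K * reachWithin P (N + 1) p := by
      rw [← inv_le_iff_one_le_mul₀ hpos]
      exact single_le_sum (f := fun p => (reachWithin P (N + 1) p)⁻¹) (fun p _ => hinv p)
        (mem_univ p)
    simp only [mul_left_comm _ K, ← mul_sum, hρ.sum_mul_sum_sub_reachWithin hne, mul_sub]
    linarith

end Reachability

section UpperBound

variable {A : Type*} {ρ T : A → ℝ}

/-- The upper bound for the distance at a kernel near `τ`: the probability of missing the diagonal,
corrected by a multiple of a Lyapunov function and capped at `1`. -/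
noncomputable def distBound (ρ T : A → ℝ) (ε : ℝ) (p : A) : ℝ :=
  min 1 (1 - ρ p + ε * T p)

theorem distBound_le (ρ T : A → ℝ) (ε : ℝ) (p : A) :
    distBound ρ T ε p ≤ 1 - ρ p + ε * T p :=
  min_le_right _ _

theorem is01_distBound (hρ : Is01 ρ) (hT : 0 ≤ T) {ε : ℝ} (hε : 0 ≤ ε) :
    Is01 (distBound ρ T ε) := fun p =>
  ⟨le_min zero_le_one (add_nonneg (sub_nonneg.2 (hρ p).2) (mul_nonneg hε (hT p))), min_le_left _ _⟩

end UpperBound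

section Policies

variable {S L : Type*} [Fintype S] {ℓ : S → L} {τ σ : S → S → ℝ} {P : S × S → S × S → ℝ}
  {ρ T : S × S → ℝ}

theorem IsPolicy.label_eq_of_pos (hP : IsPolicy ℓ τ P) (hρ : IsLfpOn (ReachF P) ρ) {p : S × S}
    (hp : 0 < ρ p) : ℓ p.1 = ℓ p.2 := by
  by_contra hℓ
  have hzero : ∀ n, reachWithin P n p = 0 := fun n => by
    induction n with
    | zero => rfl
    | succ n ih =>
      rw [reachWithin_succ_of_ne (ne_of_apply_ne ℓ hℓ)]
      refine sum_eq_zero fun q _ => ?_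
      by_cases hq : q = p
      · rw [hq, ih, mul_zero]
      · have hPq : q ∉ psupp (P p) := by rwa [hP.2.2 p hℓ]
        rw [le_antisymm (not_lt.1 hPq) ((hP.1 p).1 q), zero_mul]
  obtain ⟨n, hn⟩ := hρ.exists_reachWithin_pos hP.1 hp
  exact hn.ne' (hzero n)

theorem IsPolicy.exists_isCoupling_sum_mul_le (hP : IsPolicy ℓ τ P) (hσ : IsTransFn σ)
    {p : S × S} (hp : ℓ p.1 = ℓ p.2) :
    ∃ ω, IsCoupling ω (σ p.1) (σ p.2) ∧ ∀ d, Is01 d →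
      ∑ q, ω q * d q ≤ ∑ q, P p q * d q + 2 * Fintype.card S * dF σ τ := by
  obtain ⟨ω, hω, h⟩ := (hP.2.1 p hp).exists_isCoupling_sum_mul_le (hσ p.1) (hσ p.2)
  refine ⟨ω, hω, fun d hd => (h d hd).trans ?_⟩
  linarith [sum_abs_sub_le_card_mul_dF σ τ p.1, sum_abs_sub_le_card_mul_dF σ τ p.2]

theorem IsPolicy.deltaF_distBound_le (hP : IsPolicy ℓ τ P) (hρ : IsLfpOn (ReachF P) ρ)
    (hT : IsLyapunovOn P (psupp ρ) T) (hσ : IsTransFn σ) {ε : ℝ}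
    (hε : 2 * Fintype.card S * dF σ τ ≤ ε) :
    DeltaF ℓ σ (distBound ρ T ε) ≤ distBound ρ T ε := by
  have hε0 : 0 ≤ ε := (mul_nonneg (by positivity) (dF_nonneg σ τ)).trans hε
  have he := is01_distBound hρ.1 hT.nonneg hε0
  have hle_one : ∀ p, DeltaF ℓ σ (distBound ρ T ε) p ≤ 1 := fun p => (hσ.mapsTo_deltaF he p).2
  intro p
  refine le_min (hle_one p) ?_
  by_cases hdiag : p.1 = p.2
  · obtain ⟨s, t⟩ := p
    obtain rfl : s = t := hdiag
    have hzero : ∀ u, distBound ρ T ε (u, u) = 0 := fun u => by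
      simp [distBound, hρ.reach_of_eq, hT.diag]
    exact (hσ.deltaF_diag_nonpos he hzero s).trans ((he _).1.trans (distBound_le ..))
  rcases (hρ.1 p).1.eq_or_lt with hp | hp
  · exact (hle_one p).trans (by simpa [← hp] using mul_nonneg hε0 (hT.nonneg p))
  have hℓ := hP.label_eq_of_pos hρ hp
  obtain ⟨ω, hω, hωP⟩ := hP.exists_isCoupling_sum_mul_le hσ hℓ
  calc DeltaF ℓ σ (distBound ρ T ε) p
      ≤ ∑ q, P p q * distBound ρ T ε q + 2 * Fintype.card S * dF σ τ :=
        (deltaF_le_sum_mul he hℓ hω).trans (hωP _ he)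
    _ ≤ ∑ q, P p q * (1 - ρ q + ε * T q) + ε :=
        add_le_add ((hP.1 p).sum_mul_le_sum_mul (distBound_le ρ T ε)) hε
    _ = 1 - ρ p + ε * (1 + ∑ q, P p q * T q) := by
        simp only [mul_add, mul_sub, sum_add_distrib, sum_sub_distrib, mul_one, (hP.1 p).2,
          hρ.sum_mul_reach_of_ne hdiag, mul_left_comm _ ε, ← mul_sum]
        ring
    _ ≤ 1 - ρ p + ε * T p := by
        gcongr
        exact hT.drift p hp hdiag

theorem IsPolicy.exists_dist_le_one_sub_add_mul_dF (hP : IsPolicy ℓ τ P)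
    (hρ : IsLfpOn (ReachF P) ρ) :
    ∃ C : S × S → ℝ, ∀ σ d, IsTransFn σ → IsLfpOn (DeltaF ℓ σ) d →
      ∀ p, d p ≤ 1 - ρ p + C p * dF σ τ := by
  obtain ⟨T, hT⟩ := hρ.exists_isLyapunovOn_psupp hP.1
  refine ⟨fun p => 2 * Fintype.card S * T p, fun σ d hσ hd p => ?_⟩
  have hε : 0 ≤ 2 * Fintype.card S * dF σ τ := mul_nonneg (by positivity) (dF_nonneg σ τ)
  have he := is01_distBound hρ.1 hT.nonneg hε
  calc d p ≤ distBound ρ T (2 * Fintype.card S * dF σ τ) p :=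
        hd.le_of_prefixed hσ.mapsTo_deltaF hσ.monotoneOn_deltaF he
          (hP.deltaF_distBound_le hρ hT hσ le_rfl) p
    _ ≤ 1 - ρ p + 2 * Fintype.card S * dF σ τ * T p := distBound_le ..
    _ = 1 - ρ p + 2 * Fintype.card S * T p * dF σ τ := by ring

end Policies

theorem robust_implies_continuous_general {S L : Type*} [Fintype S] {ℓ : S → L} {τ : S → S → ℝ}
    {s t : S} (hst : Robust ℓ τ s t) :
    ∃ C, ∀ σ d, IsTransFn σ → IsLfpOn (DeltaF ℓ σ) d → d (s, t) ≤ C * dF σ τ := by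
  obtain ⟨P, ρ, hP, hρ, hρst⟩ := hst
  obtain ⟨C, hC⟩ := hP.exists_dist_le_one_sub_add_mul_dF hρ
  exact ⟨C (s, t), fun σ d hσ hd => by simpa [hρst] using hC σ d hσ hd (s, t)⟩

/-- Theorem 7: if `s ≃ t` (robust probabilistic bisimilarity), then the distance function
is continuous at `τ`: for every sequence `τ_n → τ`, `lim_n δ_{τ_n}(s,t) = 0 = δ_τ(s,t)`. -/
theorem robust_implies_continuous {S L : Type*} [Fintype S] [Nonempty S] [Fintype L]
    (ℓ : S → L) (hℓ : ∃ a b : S, ℓ a ≠ ℓ b)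
    (τ : S → S → ℝ) (hτ : IsTransFn τ) (s t : S)
    (hst : Robust ℓ τ s t)
    (τn : ℕ → S → S → ℝ) (hτn : ∀ n, IsTransFn (τn n))
    (hconv : Tendsto (fun n => dF (τn n) τ) atTop (nhds 0))
    (δ : S × S → ℝ) (hδ : IsLfpOn (DeltaF ℓ τ) δ)
    (δn : ℕ → S × S → ℝ) (hδn : ∀ n, IsLfpOn (DeltaF ℓ (τn n)) (δn n)) :
    Tendsto (fun n => δn n (s, t)) atTop (nhds 0) ∧ δ (s, t) = 0 := by
  obtain ⟨C, hC⟩ := robust_implies_continuous_general hst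
  refine ⟨squeeze_zero (fun n => ((hδn n).1 _).1) (fun n => hC _ _ (hτn n) (hδn n)) ?_,
    le_antisymm ?_ (hδ.1 _).1⟩
  · simpa using hconv.const_mul C
  · simpa [dF_self] using hC τ δ hτ hδ
end
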